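/- Define α_n(I) = #{π ∈ S_n : D(π) ⊆ I} and α^cyc_n(I) = #{n-cycles π ∈ S_n : D(π) ⊆ I}. Then for all I ⊆ [n-1]: α_n(I) = Σ_{d ∣ gcd(I ∪ {n})} (n/d) · α^cyc_{n/d}(I/d). -/

import Mathlib

/-!
Cut `[n]` into consecutive blocks after the positions in `I`. A permutation with `D(π) ⊆ I` is one
that increases on each block, and such permutations correspond, by stable sorting, to words of
length `n` in which the letter `v` occurs as often as the size of block `v`
(`alphaP_eq_card_words`). Every word is a power of a unique primitive word; if it is a `d`-th power,
then `d` divides all block sizes, equivalently `d ∣ gcd (I ∪ {n})`, and its primitive root has length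
`n / d` and content given by `I/d` (`content_divSet`, `dvd_of_content_eq`).

It remains to count primitive words of length `m` (`card_primWords`), by a form of the
Gessel-Reutenauer bijection. A full cycle `π` with `D(π) ⊆ I` and a starting point `x` give the word
of blocks visited by `x, π x, π² x, …`. As `π` increases on blocks, comparing two points amounts to
comparing their itineraries lexicographically (`itinerary_strictMono`), so the word is primitive and
determines `(x, π)`. Conversely, ranking the rotations of a primitive word lexicographically turns
rotation into a full cycle (`exists_perm_of_primitive`). Hence there are `m · α^cyc_m(I)` primitive
words.
-/

open Finset

/-- The value `π(i)` of a permutation of `[n]`, in 1-based position notation. -/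
def permVal {n : ℕ} (π : Equiv.Perm (Fin n)) (i : ℕ) : ℕ :=
  if h : i - 1 < n then ((π ⟨i - 1, h⟩ : Fin n) : ℕ) else 0

/-- The descent set `D(π) = {i ∈ [n-1] : π(i) > π(i+1)}` (1-based). -/
def descSet {n : ℕ} (π : Equiv.Perm (Fin n)) : Finset ℕ :=
  (Finset.Ioo 0 n).filter fun i => permVal π (i + 1) < permVal π i

/-- `π` is an `n`-cycle: a permutation of `[n]` consisting of a single cycle of length `n`. -/
def IsFullCycle {n : ℕ} (π : Equiv.Perm (Fin n)) : Prop :=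
  ∀ x y : Fin n, ∃ k : ℕ, (π ^ k) x = y

/-- `α_n(I)`: number of permutations of `[n]` with descent set contained in `I`. -/
noncomputable def alphaP (n : ℕ) (I : Finset ℕ) : ℕ :=
  Nat.card {π : Equiv.Perm (Fin n) // descSet π ⊆ I}

/-- `α^cyc_n(I)`: number of `n`-cycles with descent set contained in `I`. -/
noncomputable def alphaC (n : ℕ) (I : Finset ℕ) : ℕ :=
  Nat.card {π : Equiv.Perm (Fin n) // IsFullCycle π ∧ descSet π ⊆ I}

/-- `β_n(I)`: number of permutations of `[n]` with descent set exactly `I`. -/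
noncomputable def betaP (n : ℕ) (I : Finset ℕ) : ℕ :=
  Nat.card {π : Equiv.Perm (Fin n) // descSet π = I}

/-- `β^cyc_n(I)`: number of `n`-cycles with descent set exactly `I`. -/
noncomputable def betaC (n : ℕ) (I : Finset ℕ) : ℕ :=
  Nat.card {π : Equiv.Perm (Fin n) // IsFullCycle π ∧ descSet π = I}

/-- `I/d = {i/d : i ∈ I, d ∣ i}`. -/
def divSet (I : Finset ℕ) (d : ℕ) : Finset ℕ :=
  (I.filter fun i => d ∣ i).image (· / d)

/-! ### Block indices, the shift and letter contents -/

/-- The index of the block containing position `i` (0-based) when `[n]` is cut into consecutive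
blocks after each 1-based position in `I`; that is, the number of cuts at or before `i`.
The 1-based descent position `i + 1` separates the 0-based positions `i` and `i + 1`, hence `≤`. -/
def blockIdx (I : Finset ℕ) (i : ℕ) : ℕ := (I.filter (· ≤ i)).card

/-- The left shift on infinite words. A word of length `n` is encoded as an `n`-periodic
sequence, so rotation of the word becomes `seqShift`. -/
def seqShift (s : ℕ → ℕ) : ℕ → ℕ := fun k => s (k + 1)

/-- The multiset of the first `n` letters of `s`. -/
def content (n : ℕ) (s : ℕ → ℕ) : Multiset ℕ := ∑ i ∈ range n, {s i}

lemma blockIdx_mono (I : Finset ℕ) : Monotone (blockIdx I) := by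
  intro a b h
  apply card_le_card
  intro x hx
  simp only [mem_filter] at hx ⊢
  exact ⟨hx.1, hx.2.trans h⟩

lemma blockIdx_lt {I : Finset ℕ} {i j : ℕ} (hj : j ∈ I) (h : i < j) :
    blockIdx I i < blockIdx I j := by
  apply card_lt_card
  rw [ssubset_iff_of_subset]
  · exact ⟨j, by simp [hj], by simp [h]⟩
  · intro x hx
    simp only [mem_filter] at hx ⊢
    exact ⟨hx.1, hx.2.trans h.le⟩

lemma blockIdx_succ {I : Finset ℕ} {i : ℕ} (hi : i + 1 ∉ I) :
    blockIdx I (i + 1) = blockIdx I i := by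
  unfold blockIdx
  congr 1
  ext x
  simp only [mem_filter]
  constructor
  · rintro ⟨h1, h2⟩
    refine ⟨h1, ?_⟩
    rcases Nat.lt_or_ge x (i + 1) with h | h
    · omega
    · exact absurd (le_antisymm h2 h ▸ h1) hi
  · rintro ⟨h1, h2⟩
    exact ⟨h1, by omega⟩

lemma seqShift_iterate (s : ℕ → ℕ) (j k : ℕ) : seqShift^[j] s k = s (k + j) := by
  induction j generalizing s with
  | zero => rfl
  | succ j ih =>
    rw [Function.iterate_succ_apply, ih]
    simp only [seqShift]
    congr 1

lemma permVal_succ {n : ℕ} (π : Equiv.Perm (Fin n)) {i : ℕ} (h : i < n) :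
    permVal π (i + 1) = π ⟨i, h⟩ := by
  simp [permVal, h]

/-! ### Descents and blocks -/

/-- `D(π) ⊆ I` means exactly that `π` is increasing on each block of `I`. -/
lemma descSet_subset_iff {n : ℕ} (π : Equiv.Perm (Fin n)) (I : Finset ℕ) :
    descSet π ⊆ I ↔
      ∀ x y : Fin n, x < y → blockIdx I x = blockIdx I y → π x < π y := by
  constructor
  · intro h
    -- adjacent positions in the same block, then any two positions by induction on the distance
    have step : ∀ i (hi : i + 1 < n), blockIdx I i = blockIdx I (i + 1) →
        π ⟨i, by omega⟩ < π ⟨i + 1, hi⟩ := by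
      intro i hi hb
      have hnot : i + 1 ∉ I := fun hm => absurd hb (blockIdx_lt hm (by omega)).ne
      have h2 : i + 1 ∉ descSet π := fun hm => hnot (h hm)
      simp only [descSet, mem_filter, mem_Ioo, not_and, not_lt] at h2
      have h3 := h2 ⟨by omega, hi⟩
      rw [permVal_succ π (by omega : i < n), permVal_succ π hi] at h3
      refine lt_of_le_of_ne (Fin.le_def.2 h3) fun he => ?_
      have := π.injective he
      simp at this
    have key : ∀ k x (hx : x + k + 1 < n), blockIdx I x = blockIdx I (x + k + 1) →
        π ⟨x, by omega⟩ < π ⟨x + k + 1, hx⟩ := by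
      intro k
      induction k with
      | zero => intro x hx hb; exact step x hx hb
      | succ k ih =>
        intro x hx hb
        have m1 : blockIdx I x ≤ blockIdx I (x + k + 1) := blockIdx_mono I (by omega)
        have m2 : blockIdx I (x + k + 1) ≤ blockIdx I (x + (k + 1) + 1) :=
          blockIdx_mono I (by omega)
        exact (ih x (by omega) (by omega)).trans (step (x + k + 1) hx (by
          have : x + k + 1 + 1 = x + (k + 1) + 1 := by omega
          rw [this]; omega))
    rintro ⟨x, hx⟩ ⟨y, hy⟩ hxy hb
    rw [Fin.mk_lt_mk] at hxy
    obtain ⟨k, rfl⟩ := Nat.exists_eq_add_of_lt hxy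
    exact key k x hy hb
  · intro h i hi
    simp only [descSet, mem_filter, mem_Ioo] at hi
    by_contra hn
    obtain ⟨j, rfl⟩ : ∃ j, i = j + 1 := ⟨i - 1, by omega⟩
    have hj : j < n := by omega
    have e1 := permVal_succ π hi.1.2
    have e2 := permVal_succ π hj
    have := h ⟨j, hj⟩ ⟨j + 1, hi.1.2⟩ (by simp) (blockIdx_succ hn).symm
    rw [Fin.lt_def] at this
    omega

/-! ### Divisibility of contents -/

lemma content_fin (n : ℕ) (s : ℕ → ℕ) : content n s = ∑ i : Fin n, {s i} :=
  (Fin.sum_univ_eq_sum_range (fun i => ({s i} : Multiset ℕ)) n).symm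

/-- A weakly increasing word is determined by its multiset of letters. -/
lemma monotone_ext {n : ℕ} {f g : Fin n → ℕ} (hf : Monotone f) (hg : Monotone g)
    (h : ∑ i, ({f i} : Multiset ℕ) = ∑ i, {g i}) : f = g := by
  have e : ∀ f : Fin n → ℕ, ∑ i, ({f i} : Multiset ℕ) = (List.ofFn f : Multiset ℕ) := by
    intro f
    rw [← Fin.univ_val_map, Finset.sum, ← Multiset.sum_map_singleton (Multiset.map f univ.val),
      Multiset.map_map]
    rfl
  rw [e, e, Multiset.coe_eq_coe] at h
  apply List.ofFn_injective
  exact h.eq_of_sortedLE hf.sortedLE_ofFn hg.sortedLE_ofFn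

lemma content_mul_of_periodic (d m : ℕ) (s : ℕ → ℕ) (hs : ∀ k, s (k + m) = s k) :
    content (m * d) s = d • content m s := by
  have hs' : ∀ d k, s (m * d + k) = s k := by
    intro d
    induction d with
    | zero => simp
    | succ d ih => intro k; rw [← ih k, ← hs (m * d + k)]; congr 1; ring
  induction d with
  | zero => simp [content]
  | succ d ih =>
    rw [succ_nsmul, ← ih]
    simp only [content]
    rw [Nat.mul_succ, Finset.sum_range_add]
    simp only [hs']

lemma content_comp_div (d m : ℕ) (hd : 0 < d) (s : ℕ → ℕ) :
    content (m * d) (fun i => s (i / d)) = d • content m s := by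
  induction m with
  | zero => simp [content]
  | succ m ih =>
    simp only [content] at ih ⊢
    rw [Nat.succ_mul, Finset.sum_range_add, ih, sum_range_succ, smul_add]
    congr 1
    rw [Finset.sum_congr rfl (g := fun _ => {s m}), sum_const, card_range]
    intro i hi
    rw [mem_range] at hi
    rw [mul_comm m d, Nat.mul_add_div hd, Nat.div_eq_of_lt hi, add_zero]

lemma blockIdx_divSet {I : Finset ℕ} {d : ℕ} (hd : 0 < d) (h : ∀ i ∈ I, d ∣ i) (i : ℕ) :
    blockIdx (divSet I d) (i / d) = blockIdx I i := by
  unfold blockIdx divSet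
  rw [filter_true_of_mem h, filter_image, card_image_of_injOn]
  · congr 1
    ext x
    simp only [mem_filter]
    refine and_congr_right fun hx => ?_
    obtain ⟨c, rfl⟩ := h x hx
    rw [Nat.mul_div_cancel_left _ hd, Nat.le_div_iff_mul_le hd, mul_comm]
  · intro x hx y hy hxy
    simp only [coe_filter, Set.mem_ofPred_eq] at hx hy
    exact (Nat.div_left_inj (h x hx.1) (h y hy.1)).1 hxy

/-- If `d` divides all of `I`, the blocks of `I` are those of `I/d` dilated by `d`. -/
lemma content_divSet {I : Finset ℕ} {d : ℕ} (m : ℕ) (hd : 0 < d) (h : ∀ i ∈ I, d ∣ i) :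
    content (m * d) (blockIdx I) = d • content m (blockIdx (divSet I d)) := by
  rw [← content_comp_div d m hd]
  simp only [blockIdx_divSet hd h]

lemma content_filter_card (n : ℕ) (s : ℕ → ℕ) (p : ℕ → Prop) [DecidablePred p] :
    ((content n s).filter p).card = ((range n).filter fun i => p (s i)).card := by
  induction n with
  | zero => simp [content]
  | succ n ih =>
    simp only [content] at ih ⊢
    rw [sum_range_succ, Multiset.filter_add, Multiset.card_add, ih, range_add_one, filter_insert,
      Multiset.filter_singleton]
    split_ifs with h <;> simp

/-- Each `j ∈ I` is the total size of the blocks before it, so a common divisor of the block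
sizes divides `j`. -/
lemma dvd_of_content_eq {n d : ℕ} {I : Finset ℕ} {M : Multiset ℕ} (hI : I ⊆ Ioo 0 n)
    (h : content n (blockIdx I) = d • M) {j : ℕ} (hj : j ∈ I) : d ∣ j := by
  have h1 := content_filter_card n (blockIdx I) (· < blockIdx I j)
  have h2 : ((range n).filter fun i => blockIdx I i < blockIdx I j) = range j := by
    ext i
    have := mem_Ioo.1 (hI hj)
    simp only [mem_filter, mem_range]
    constructor
    · rintro ⟨_, hlt⟩
      by_contra hge
      exact absurd (blockIdx_mono I (not_lt.1 hge)) (not_le.2 hlt)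
    · intro hlt
      exact ⟨by omega, blockIdx_lt hj hlt⟩
  rw [h2, card_range, h, Multiset.filter_nsmul, Multiset.card_nsmul] at h1
  exact ⟨_, h1.symm⟩

/-! ### Words and permutations -/

/-- Words of length `n` (as `n`-periodic sequences) in which each letter `v` occurs as often as
the `v`-th block of `I` is long. -/
def Words (n : ℕ) (I : Finset ℕ) : Type :=
  {s : ℕ → ℕ // Function.IsPeriodicPt seqShift n s ∧ content n s = content n (blockIdx I)}

/-- The primitive words among `Words n I`: those whose minimal period under rotation is `n`. -/
def PrimWords (n : ℕ) (I : Finset ℕ) : Type :=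
  {s : ℕ → ℕ // Function.minimalPeriod seqShift s = n ∧ content n s = content n (blockIdx I)}

lemma isPeriodicPt_seqShift {n : ℕ} {s : ℕ → ℕ} :
    Function.IsPeriodicPt seqShift n s ↔ ∀ k, s (k + n) = s k := by
  rw [Function.IsPeriodicPt, Function.IsFixedPt, funext_iff]
  simp only [seqShift_iterate]

/-- A permutation increasing on the blocks of `I` corresponds to the word recording, for each
value, the block in which it occurs; the inverse is the stable sort of the word. -/
lemma alphaP_eq_card_words (n : ℕ) (hn : 0 < n) (I : Finset ℕ) :
    alphaP n I = Nat.card (Words n I) := by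
  have hmod : ∀ k, k % n < n := fun k => Nat.mod_lt k hn
  let F : {π : Equiv.Perm (Fin n) // descSet π ⊆ I} → Words n I := fun π =>
    ⟨fun k => blockIdx I (π.1.symm ⟨k % n, hmod k⟩), by
      rw [isPeriodicPt_seqShift]; intro k; simp, by
      rw [content_fin, content_fin,
        ← Equiv.sum_comp π.1.symm (fun i : Fin n => ({blockIdx I i} : Multiset ℕ))]
      refine sum_congr rfl fun i _ => ?_
      simp only [Nat.mod_eq_of_lt i.2]⟩
  refine Nat.card_eq_of_bijective F ⟨?_, ?_⟩
  · have key : ∀ π : {π : Equiv.Perm (Fin n) // descSet π ⊆ I},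
        π.1 = Tuple.sort (fun i : Fin n => (F π).1 i) := by
      intro π
      rw [Tuple.eq_sort_iff]
      have e : ∀ i : Fin n, (F π).1 (π.1 i) = blockIdx I i := by
        intro i
        simp only [F, Nat.mod_eq_of_lt (π.1 i).2, Fin.eta, Equiv.symm_apply_apply]
      constructor
      · intro i j hij
        simp only [Function.comp, e]
        exact blockIdx_mono I hij
      · intro i j hij h
        rw [e, e] at h
        exact (descSet_subset_iff _ _).1 π.2 i j hij h
    intro π π' h
    apply Subtype.ext
    rw [key π, key π', h]
  · rintro ⟨s, hs, hc⟩
    -- the stable sort of the word is the only possible preimage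
    set f : Fin n → ℕ := fun i => s i with hf
    have hsort := (Tuple.eq_sort_iff (f := f) (σ := Tuple.sort f)).1 rfl
    have e : f ∘ Tuple.sort f = fun i : Fin n => blockIdx I i := by
      refine monotone_ext hsort.1 (fun i j hij => blockIdx_mono I hij) ?_
      rw [← content_fin, ← hc, content_fin]
      exact Equiv.sum_comp (Tuple.sort f) (fun i : Fin n => ({s i} : Multiset ℕ))
    have e' : ∀ i, f (Tuple.sort f i) = blockIdx I i := fun i => congrFun e i
    refine ⟨⟨Tuple.sort f, ?_⟩, ?_⟩
    · rw [descSet_subset_iff]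
      intro x y hxy h
      exact hsort.2 x y hxy (by rw [e', e', h])
    · apply Subtype.ext
      funext k
      simp only [F]
      rw [← e', Equiv.apply_symm_apply]
      simp only [hf]
      exact Function.Periodic.map_mod_nat (isPeriodicPt_seqShift.1 hs) k

/-! ### Itineraries of full cycles -/

section Itinerary

variable {m : ℕ} (π : Equiv.Perm (Fin m)) (I : Finset ℕ)

/-- The sequence of blocks of `I` visited by the orbit of `x` under `π`. -/
def itinerary (x : Fin m) : ℕ → ℕ := fun k => blockIdx I ((π ^ k) x)

lemma seqShift_itinerary (x : Fin m) :
    seqShift (itinerary π I x) = itinerary π I (π x) := by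
  funext k
  simp only [seqShift, itinerary, pow_succ, Equiv.Perm.mul_apply]

lemma seqShift_iterate_itinerary (x : Fin m) (e : ℕ) :
    seqShift^[e] (itinerary π I x) = itinerary π I ((π ^ e) x) := by
  funext k
  simp only [seqShift_iterate, itinerary, pow_add, Equiv.Perm.mul_apply]

variable {π I}

/-- As long as the itineraries of `x < y` agree, the orbits keep their relative order. -/
lemma pow_lt_pow_of_itinerary_eq (hD : descSet π ⊆ I) {x y : Fin m} (hxy : x < y) {k : ℕ}
    (h : ∀ j < k, itinerary π I x j = itinerary π I y j) : (π ^ k) x < (π ^ k) y := by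
  induction k with
  | zero => simpa using hxy
  | succ k ih =>
    rw [pow_succ', Equiv.Perm.mul_apply, Equiv.Perm.mul_apply]
    exact (descSet_subset_iff π I).1 hD _ _ (ih fun j hj => h j (by omega)) (h k (by omega))

/-- If `x < y = π ^ e x` had the same itinerary, then `x < π ^ e x < π ^ (2 * e) x < ⋯` would be
an infinite chain in `Fin m`. -/
lemma itinerary_injective (hD : descSet π ⊆ I) (hc : IsFullCycle π) :
    Function.Injective (itinerary π I) := by
  suffices h : ∀ x y : Fin m, x < y → itinerary π I x ≠ itinerary π I y by
    intro x y hxy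
    rcases lt_trichotomy x y with hlt | rfl | hlt
    · exact absurd hxy (h _ _ hlt)
    · rfl
    · exact absurd hxy.symm (h _ _ hlt)
  intro x y hlt heq
  obtain ⟨e, rfl⟩ := hc x y
  have hmono : StrictMono fun j : ℕ => (π ^ (e * j)) x := by
    refine strictMono_nat_of_lt_succ fun j => ?_
    have := pow_lt_pow_of_itinerary_eq hD hlt (k := e * j) fun i _ => congrFun heq i
    rwa [← Equiv.Perm.mul_apply, ← pow_add] at this
  exact not_injective_infinite_finite _ hmono.injective

/-- Itineraries, ordered lexicographically, are sorted in the same way as their starting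
points. -/
lemma itinerary_strictMono (hD : descSet π ⊆ I) (hc : IsFullCycle π) :
    StrictMono fun x => toLex (itinerary π I x) := by
  intro x y hxy
  have hne : itinerary π I x ≠ itinerary π I y := fun h =>
    hxy.ne (itinerary_injective hD hc h)
  have hex : ∃ k, itinerary π I x k ≠ itinerary π I y k := Function.ne_iff.1 hne
  classical
  refine ⟨Nat.find hex, fun j hj => not_not.1 (Nat.find_min hex hj), ?_⟩
  refine lt_of_le_of_ne (blockIdx_mono I ?_) (Nat.find_spec hex)
  exact (pow_lt_pow_of_itinerary_eq hD hxy fun j hj => not_not.1 (Nat.find_min hex hj)).le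

lemma minimalPeriod_of_isFullCycle (hc : IsFullCycle π) (x : Fin m) :
    Function.minimalPeriod π x = m := by
  have hper : 0 < Function.minimalPeriod π x :=
    Function.minimalPeriod_pos_of_mem_periodicPts
      (Function.Injective.mem_periodicPts π.injective x)
  have h := card_bij (s := range (Function.minimalPeriod π x)) (t := (univ : Finset (Fin m)))
    (fun k _ => π^[k] x) (fun _ _ => mem_univ _)
    (fun a ha b hb hab => Function.iterate_injOn_Iio_minimalPeriod
      (by simpa using ha) (by simpa using hb) hab)
    (fun y _ => by
      obtain ⟨k, hk⟩ := hc x y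
      refine ⟨k % Function.minimalPeriod π x, mem_range.2 (Nat.mod_lt _ hper), ?_⟩
      rw [Function.iterate_mod_minimalPeriod_eq, Equiv.Perm.iterate_eq_pow, hk])
  simpa using h

lemma minimalPeriod_itinerary (hD : descSet π ⊆ I) (hc : IsFullCycle π) (x : Fin m) :
    Function.minimalPeriod seqShift (itinerary π I x) = m := by
  refine Eq.trans ?_ (minimalPeriod_of_isFullCycle hc x)
  refine Function.minimalPeriod_eq_minimalPeriod_iff.2 fun e => ?_
  rw [Function.IsPeriodicPt, Function.IsFixedPt, seqShift_iterate_itinerary,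
    (itinerary_injective hD hc).eq_iff, Function.IsPeriodicPt, Function.IsFixedPt,
    Equiv.Perm.iterate_eq_pow]

lemma content_itinerary (hc : IsFullCycle π) (x : Fin m) :
    content m (itinerary π I x) = content m (blockIdx I) := by
  rw [content_fin m (blockIdx I), content]
  have hm := minimalPeriod_of_isFullCycle hc x
  refine sum_bij (fun k _ => π^[k] x) (fun _ _ => mem_univ _) (fun a ha b hb hab => ?_)
    (fun y _ => ?_) (fun k _ => ?_)
  · exact Function.iterate_injOn_Iio_minimalPeriod (f := π) (x := x)
      (by simpa [hm] using ha) (by simpa [hm] using hb) hab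
  · obtain ⟨k, hk⟩ := hc x y
    refine ⟨k % m, mem_range.2 (Nat.mod_lt _ (Fin.pos x)), ?_⟩
    have := Function.iterate_mod_minimalPeriod_eq (f := π) (x := x) (n := k)
    rw [hm] at this
    rw [this, Equiv.Perm.iterate_eq_pow, hk]
  · rw [Equiv.Perm.iterate_eq_pow, itinerary]

lemma range_itinerary (hc : IsFullCycle π) (x : Fin m) :
    Set.range (itinerary π I) = Set.range fun k => seqShift^[k] (itinerary π I x) := by
  ext s
  constructor
  · rintro ⟨y, rfl⟩
    obtain ⟨k, rfl⟩ := hc x y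
    exact ⟨k, seqShift_iterate_itinerary π I x k⟩
  · rintro ⟨k, rfl⟩
    exact ⟨_, (seqShift_iterate_itinerary π I x k).symm⟩

end Itinerary

lemma strictMono_ext {m : ℕ} {α : Type*} [LinearOrder α] {f g : Fin m → α} (hf : StrictMono f)
    (hg : StrictMono g) (h : Set.range f = Set.range g) : f = g :=
  (hf.range_inj hg).1 h

/-! ### Primitive words from full cycles -/

/-- Rank the `m` rotations of a primitive word lexicographically; the cycle sends the rank of a
rotation to the rank of its shift, and the word is the itinerary of its own rank. -/
lemma exists_perm_of_primitive {m : ℕ} (hm : 0 < m) {I : Finset ℕ} {s : ℕ → ℕ}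
    (hs : Function.minimalPeriod seqShift s = m)
    (hcont : content m s = content m (blockIdx I)) :
    ∃ π : Equiv.Perm (Fin m), IsFullCycle π ∧ descSet π ⊆ I ∧ ∃ x, itinerary π I x = s := by
  classical
  have hper : Function.IsPeriodicPt seqShift m s := hs ▸ Function.isPeriodicPt_minimalPeriod _ _
  have hinj : Set.InjOn (fun k => toLex (seqShift^[k] s)) (range m : Set ℕ) := by
    intro a ha b hb hab
    exact Function.iterate_injOn_Iio_minimalPeriod (f := seqShift) (x := s)
      (by simpa [hs] using ha) (by simpa [hs] using hb) hab
  have hR : ((range m).image fun k => toLex (seqShift^[k] s)).card = m := by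
    rw [card_image_of_injOn hinj, card_range]
  -- `C y` is the `y`-th smallest rotation of `s`
  obtain ⟨C, hCm, hCr⟩ : ∃ C : Fin m → ℕ → ℕ, StrictMono (fun y => toLex (C y)) ∧
      ∀ t, (∃ y, C y = t) ↔ ∃ k < m, seqShift^[k] s = t := by
    refine ⟨fun y => ofLex (orderEmbOfFin _ hR y), (orderEmbOfFin _ hR).strictMono, fun t => ?_⟩
    have := Set.ext_iff.1 (range_orderEmbOfFin _ hR) (toLex t)
    rw [Set.mem_range, mem_coe, mem_image] at this
    simp only [mem_range] at this
    exact this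
  have hCinj : Function.Injective C := fun x y h => hCm.injective (congrArg toLex h)
  have hmod : ∀ k, seqShift^[k % m] s = seqShift^[k] s := fun k => hper.iterate_mod_apply k
  have hCr' : ∀ k, ∃ y, C y = seqShift^[k] s := fun k =>
    (hCr _).2 ⟨k % m, Nat.mod_lt _ hm, hmod k⟩
  have hnext : ∀ y, ∃ z, C z = seqShift (C y) := by
    intro y
    obtain ⟨k, _, hk⟩ := (hCr _).1 ⟨y, rfl⟩
    obtain ⟨z, hz⟩ := hCr' (k + 1)
    exact ⟨z, by rw [hz, Function.iterate_succ_apply', hk]⟩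
  choose f hf using hnext
  have hfk : ∀ k y, C (f^[k] y) = seqShift^[k] (C y) := by
    intro k
    induction k with
    | zero => intro y; rfl
    | succ k ih => intro y; rw [Function.iterate_succ_apply, ih, hf, Function.iterate_succ_apply]
  have hcyc : ∀ x y, ∃ k, f^[k] x = y := by
    intro x y
    obtain ⟨a, ha, hxa⟩ := (hCr _).1 ⟨x, rfl⟩
    obtain ⟨b, hb, hyb⟩ := (hCr _).1 ⟨y, rfl⟩
    refine ⟨b + (m - a), hCinj ?_⟩
    rw [hfk, ← hxa, ← hyb, ← Function.iterate_add_apply, ← hmod,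
      show b + (m - a) + a = b + m by omega, Nat.add_mod_right, hmod]
  have hfsurj : Function.Surjective f := by
    intro y
    obtain ⟨k, hk⟩ := hcyc (f y) y
    exact ⟨f^[k] y, by rw [← Function.iterate_succ_apply' f, Function.iterate_succ_apply, hk]⟩
  set π : Equiv.Perm (Fin m) :=
    Equiv.ofBijective f (Finite.injective_iff_bijective.1 (Finite.injective_iff_surjective.2 hfsurj))
    with hπ
  have hπk : ∀ k x, (π ^ k) x = f^[k] x := by
    intro k x
    rw [← Equiv.Perm.iterate_eq_pow]
    rfl
  have hlex : ∀ x y, x < y → C x 0 ≤ C y 0 := by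
    intro x y hxy
    obtain ⟨i, hi, hlt⟩ := hCm hxy
    rcases Nat.eq_zero_or_pos i with rfl | hpos
    · exact le_of_lt hlt
    · exact le_of_eq (hi 0 hpos)
  -- the sorted rearrangement of the letters of `s` is `blockIdx I`
  have hC0 : (fun y => C y 0) = fun y : Fin m => blockIdx I y := by
    refine monotone_ext (fun x y hxy => ?_) (fun x y hxy => blockIdx_mono I hxy) ?_
    · rcases hxy.eq_or_lt with rfl | h
      · exact le_rfl
      · exact hlex _ _ h
    · rw [← content_fin, ← hcont, content]
      symm
      choose g hg using hCr'
      refine sum_bij (fun k _ => g k) (fun _ _ => mem_univ _) (fun a ha b hb hab => ?_)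
        (fun y _ => ?_) (fun k _ => ?_)
      · refine hinj ha hb ?_
        simp only [← hg, hab]
      · obtain ⟨k, hk, hy⟩ := (hCr _).1 ⟨y, rfl⟩
        exact ⟨k, mem_range.2 hk, hCinj (by rw [hg, hy])⟩
      · rw [hg, seqShift_iterate, zero_add]
  have hC0' : ∀ y : Fin m, blockIdx I y = C y 0 := fun y => (congrFun hC0 y).symm
  refine ⟨π, fun x y => ?_, ?_, ?_⟩
  · obtain ⟨k, hk⟩ := hcyc x y
    exact ⟨k, by rw [hπk, hk]⟩
  · rw [descSet_subset_iff]
    intro x y hxy h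
    rw [hC0', hC0'] at h
    change f x < f y
    rw [← hCm.lt_iff_lt]
    simp only [hf]
    obtain ⟨i, hi, hlt⟩ := hCm hxy
    -- equal first letters, so the first difference of the rotations survives the shift
    rcases i with _ | i
    · exact absurd h (ne_of_lt hlt)
    · exact ⟨i, fun j hj => hi (j + 1) (Nat.succ_lt_succ hj), hlt⟩
  · obtain ⟨x, hx⟩ := hCr' 0
    refine ⟨x, ?_⟩
    funext k
    simp only [itinerary]
    rw [hC0', hπk, hfk, hx, Function.iterate_zero, id, seqShift_iterate, zero_add]

/-- A pair (starting point, full cycle increasing on the blocks of `I`) is the same as a primitive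
word with block-size content. Injectivity: the set of all itineraries is the set of rotations of
the given one, and its increasing enumeration recovers starting point and cycle. -/
lemma card_primWords {m : ℕ} (hm : 0 < m) (I : Finset ℕ) :
    Finite (PrimWords m I) ∧ Nat.card (PrimWords m I) = m * alphaC m I := by
  let F : Fin m × {π : Equiv.Perm (Fin m) // IsFullCycle π ∧ descSet π ⊆ I} → PrimWords m I :=
    fun p => ⟨itinerary p.2.1 I p.1, minimalPeriod_itinerary p.2.2.2 p.2.2.1 p.1,
      content_itinerary p.2.2.1 p.1⟩
  have hF : Function.Bijective F := by
    constructor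
    · rintro ⟨x, π, hc, hD⟩ ⟨x', π', hc', hD'⟩ h
      have h0 : itinerary π I x = itinerary π' I x' := congrArg Subtype.val h
      have hrange : Set.range (itinerary π I) = Set.range (itinerary π' I) := by
        rw [range_itinerary hc x, range_itinerary hc' x', h0]
      have hcode : itinerary π I = itinerary π' I := by
        have := strictMono_ext (itinerary_strictMono hD hc) (itinerary_strictMono hD' hc')
          (by simpa [Set.range_comp'] using congrArg (Set.image toLex) hrange)
        funext y
        exact toLex_inj.1 (congrFun this y)
      have hx : x = x' := itinerary_injective hD hc (by rw [h0, hcode])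
      have hπ : π = π' := by
        ext1 y
        refine itinerary_injective hD hc ?_
        rw [← seqShift_itinerary, hcode, seqShift_itinerary]
      subst hx hπ
      rfl
    · rintro ⟨s, hs, hcont⟩
      obtain ⟨π, hc, hD, x, hx⟩ := exists_perm_of_primitive hm hs hcont
      exact ⟨⟨x, π, hc, hD⟩, Subtype.ext hx⟩
  refine ⟨Finite.of_surjective F hF.2, ?_⟩
  rw [← Nat.card_eq_of_bijective F hF, Nat.card_prod, Nat.card_fin, alphaC]

/-! ### Decomposing words by their period -/

/-- Theorem (main theorem, part (a)): for all `I ⊆ [n-1]`,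
`α_n(I) = Σ_{d ∣ gcd(I ∪ {n})} (n/d) · α^cyc_{n/d}(I/d)`. -/
theorem alphaP_eq_sum_alphaC (n : ℕ) (hn : 0 < n) (I : Finset ℕ) (hI : I ⊆ Finset.Ioo 0 n) :
    alphaP n I =
      ∑ d ∈ ((insert n I).gcd id).divisors, (n / d) * alphaC (n / d) (divSet I d) := by
  set D := ((insert n I).gcd id).divisors with hDdef
  have hg : (insert n I).gcd id ≠ 0 := by
    intro h
    exact hn.ne' (Finset.gcd_eq_zero_iff.1 h n (mem_insert_self _ _))
  have hD : ∀ d, d ∈ D ↔ d ∣ n ∧ ∀ i ∈ I, d ∣ i := by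
    intro d
    rw [hDdef, Nat.mem_divisors, and_iff_left hg, Finset.dvd_gcd_iff]
    simp
  have hpos : ∀ d ∈ D, 0 < d ∧ 0 < n / d := fun d hd => by
    have h := ((hD d).1 hd).1
    have h0 := Nat.pos_of_dvd_of_pos h hn
    exact ⟨h0, Nat.div_pos (Nat.le_of_dvd hn h) h0⟩
  rw [alphaP_eq_card_words n hn I, ← Finset.sum_coe_sort D]
  have : ∀ d : D, Finite (PrimWords (n / d) (divSet I d)) := fun d =>
    (card_primWords (hpos d d.2).2 _).1
  let F : (Σ d : D, PrimWords (n / d) (divSet I d)) → Words n I := fun p =>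
    ⟨p.2.1, by
      have hdvd := ((hD p.1).1 p.1.2).1
      rw [Function.isPeriodicPt_iff_minimalPeriod_dvd, p.2.2.1]
      exact Nat.div_dvd_of_dvd hdvd, by
      have hdvd := ((hD p.1).1 p.1.2).1
      have hs : Function.IsPeriodicPt seqShift (n / p.1) p.2.1 := by
        rw [Function.isPeriodicPt_iff_minimalPeriod_dvd, p.2.2.1]
      have h1 := content_mul_of_periodic p.1 _ _ (isPeriodicPt_seqShift.1 hs)
      have h2 := content_divSet (n / p.1) (hpos _ p.1.2).1 ((hD p.1).1 p.1.2).2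
      rw [Nat.div_mul_cancel hdvd] at h1 h2
      rw [h1, h2, p.2.2.2]⟩
  have hF : Function.Bijective F := by
    constructor
    · rintro ⟨⟨d, hd⟩, s, hs, hc⟩ ⟨⟨d', hd'⟩, s', hs', hc'⟩ h
      obtain rfl : s = s' := congrArg Subtype.val h
      have hdd : n / d = n / d' := hs.symm.trans hs'
      obtain rfl : d = d' := by
        rw [← Nat.div_div_self ((hD d).1 hd).1 hn.ne', hdd,
          Nat.div_div_self ((hD d').1 hd').1 hn.ne']
      rfl
    -- a word of minimal period `m` is the `n / m`-th power of its primitive root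
    · rintro ⟨s, hs, hc⟩
      set m := Function.minimalPeriod seqShift s with hm
      have hmn : m ∣ n := Function.isPeriodicPt_iff_minimalPeriod_dvd.1 hs
      have hm0 : 0 < m := Nat.pos_of_dvd_of_pos hmn hn
      obtain ⟨d, hd⟩ := hmn
      have hd0 : 0 < d := Nat.pos_of_ne_zero (by rintro rfl; simp at hd; omega)
      have h1 := content_mul_of_periodic d m s
        (isPeriodicPt_seqShift.1 (Function.isPeriodicPt_minimalPeriod _ _))
      rw [← hd, hc] at h1
      have hdI : ∀ i ∈ I, d ∣ i := fun i hi => dvd_of_content_eq hI h1 hi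
      have h2 := content_divSet m hd0 hdI
      rw [← hd, h1] at h2
      have hnd : n / d = m := by rw [hd, Nat.mul_div_cancel _ hd0]
      have h3 : content m s = content m (blockIdx (divSet I d)) := by
        ext v
        have := congrArg (Multiset.count v) h2
        rw [Multiset.count_nsmul, Multiset.count_nsmul] at this
        exact Nat.eq_of_mul_eq_mul_left hd0 this
      exact ⟨⟨⟨d, (hD d).2 ⟨⟨m, by rw [hd, mul_comm]⟩, hdI⟩⟩, s, by simp only [hnd]; exact hm.symm,
        by simp only [hnd]; exact h3⟩, rfl⟩
  rw [← Nat.card_eq_of_bijective F hF, Nat.card_sigma]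
  exact sum_congr rfl fun d _ => (card_primWords (hpos d d.2).2 _).2
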